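/- Let A_i ⊆ R^n (i = 1,...,n) be compact strictly convex sets with nonempty interior, and suppose each f_i: R^n × S^n → R is continuous and antipodal in u (f_i(x, −u) = −f_i(x, u)). Then there exists u ∈ S^n such that for each i, either (i) both A_i ∩ H_u^+ and A_i ∩ H_u^− are nonempty and max_{x ∈ A_i ∩ H_u^+} f_i(x,u) − min_{x ∈ A_i ∩ H_u^+} f_i(x,u) = max_{x ∈ A_i ∩ H_u^−} f_i(x,u) − min_{x ∈ A_i ∩ H_u^−} f_i(x,u), or (ii) one of A_i ∩ H_u^+ and A_i ∩ H_u^− is empty, the other equals A_i, and f_i(·, u) is constant on A_i. -/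

import Mathlib

/-- The closed upper half-space `H_u^+`. -/
def Hplus (n : ℕ) (u : EuclideanSpace ℝ (Fin (n + 1))) : Set (EuclideanSpace ℝ (Fin n)) :=
  {x | (∑ i : Fin n, u (Fin.castSucc i) * x i) ≥ u (Fin.last n)}

/-- The closed lower half-space `H_u^-`. -/
def Hminus (n : ℕ) (u : EuclideanSpace ℝ (Fin (n + 1))) : Set (EuclideanSpace ℝ (Fin n)) :=
  {x | (∑ i : Fin n, u (Fin.castSucc i) * x i) ≤ u (Fin.last n)}

/-!
By the Borsuk–Ulam theorem it suffices that the difference of the oscillations of `f i · u` over the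
two parts of `A i` is odd and continuous in `u`. Continuity is where strict convexity enters:
`A ∩ Hplus n u` has at most one point, or every point of it is a limit of points of `A` which remain
in the half-space when `u` is perturbed.

The Borsuk–Ulam theorem follows from Tucker's lemma on arbitrarily fine antipodal subdivisions of
the octahedral sphere. For that lemma, let `a b` be the cochain modulo two that detects simplices
whose labels, in order of absolute value, have alternating signs starting with `b`. Its coboundary
is `a b + a (!b)`, and the antipodal map exchanges `a b` and `a (!b)`. By induction on `k` each
`k`-dimensional hemisphere, together with its antipode, has an odd number of simplices detected by
`a b`; but no simplex with `n + 1` vertices can have alternating labels among `±1, …, ±n`.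
-/

open MvPolynomial
open scoped Topology

/-! ### Chains modulo two -/

section Chains

variable {V W : Type*}

/-- Simplicial chains modulo two on the vertex set `V`: the monomial `∏ v, X v ^ m v` stands for the
simplex with vertex multiset `m`, so the cone with apex `v` is multiplication by `X v`, and a
`k`-dimensional chain is homogeneous of degree `k + 1`. -/
abbrev Chain (V : Type*) : Type _ := MvPolynomial V (ZMod 2)

/-- The augmented simplicial boundary. Leibniz's rule says that it deletes each vertex in turn. -/
noncomputable def boundary : Derivation (ZMod 2) (Chain V) (Chain V) :=
  mkDerivation (ZMod 2) fun _ => 1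

theorem boundary_X_mul (v : V) (c : Chain V) : boundary (X v * c) = c + X v * boundary c := by
  simp [boundary, mkDerivation_X, add_comm]

theorem boundary_boundary (c : Chain V) : boundary (boundary c) = 0 := by
  induction c using MvPolynomial.induction_on with
  | C a => simp [boundary]
  | add p q hp hq => simp [hp, hq]
  | mul_X p v hp =>
    rw [mul_comm, boundary_X_mul, map_add, boundary_X_mul, hp, mul_zero, add_zero,
      CharTwo.add_self_eq_zero]

theorem boundary_rename (ν : V → W) (c : Chain V) :
    boundary (rename ν c) = rename ν (boundary c) := by
  induction c using MvPolynomial.induction_on with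
  | C a => simp [boundary]
  | add p q hp hq => simp [hp, hq]
  | mul_X p v hp =>
    rw [mul_comm, map_mul, rename_X, boundary_X_mul, boundary_X_mul, hp, map_add, map_mul, rename_X]

theorem isHomogeneous_iff_degree_eq {c : Chain V} {k : ℕ} :
    c.IsHomogeneous k ↔ ∀ m ∈ c.support, m.degree = k := by
  simp only [IsHomogeneous, IsWeightedHomogeneous, mem_support_iff, Finsupp.degree_eq_weight_one]
  rfl

theorem linearMap_congr_of_monomial {M : Type*} [AddCommMonoid M] [Module (ZMod 2) M]
    {φ ψ : Chain V →ₗ[ZMod 2] M} {c : Chain V}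
    (h : ∀ m ∈ c.support, φ (monomial m 1) = ψ (monomial m 1)) : φ c = ψ c := by
  rw [c.as_sum, map_sum, map_sum]
  refine Finset.sum_congr rfl fun m hm => ?_
  rw [← mul_one (coeff m c), ← smul_eq_mul, ← smul_monomial, map_smul, map_smul, h m hm]

theorem exists_mem_support_of_mem_support_map {φ : Chain V →ₗ[ZMod 2] Chain W} {c : Chain V}
    {m : W →₀ ℕ} (hm : m ∈ (φ c).support) :
    ∃ s ∈ c.support, m ∈ (φ (monomial s 1)).support := by
  contrapose! hm
  simp only [notMem_support_iff] at hm ⊢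
  exact linearMap_congr_of_monomial (φ := lcoeff (ZMod 2) m ∘ₗ φ) (ψ := 0) hm

theorem exists_add_single_of_mem_support_boundary {c : Chain V} {m : V →₀ ℕ}
    (hm : m ∈ (boundary c).support) : ∃ v, m + Finsupp.single v 1 ∈ c.support := by
  classical
  obtain ⟨s, hs, hms⟩ := exists_mem_support_of_mem_support_map (φ := boundary.toLinearMap) hm
  rw [Derivation.coeFn_coe, boundary, mkDerivation_monomial, one_smul] at hms
  obtain ⟨v, hv, hmv⟩ := Finset.mem_biUnion.1 (support_sum hms)
  simp only [smul_eq_mul, mul_one] at hmv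
  refine ⟨v, ?_⟩
  rwa [Finset.mem_singleton.1 (support_monomial_subset hmv), tsub_add_cancel_of_le]
  exact Finsupp.single_le_iff.2 (Nat.one_le_iff_ne_zero.2 (Finsupp.mem_support_iff.1 hv))

theorem exists_face_of_mem_support_boundary_monomial {s m : V →₀ ℕ}
    (hm : m ∈ (boundary (monomial s (1 : ZMod 2))).support) : ∃ v, m + Finsupp.single v 1 = s := by
  obtain ⟨v, hv⟩ := exists_add_single_of_mem_support_boundary hm
  exact ⟨v, Finset.mem_singleton.1 (support_monomial_subset hv)⟩

theorem isHomogeneous_boundary {c : Chain V} {k : ℕ} (hc : c.IsHomogeneous (k + 1)) :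
    (boundary c).IsHomogeneous k := by
  rw [isHomogeneous_iff_degree_eq] at hc ⊢
  intro m hm
  obtain ⟨v, hv⟩ := exists_add_single_of_mem_support_boundary hm
  simpa using hc _ hv

/-- Chains `h k` of dimension `k` whose boundary is made of `h (k - 1)` and its image under `ν`, as
for the upper hemispheres of the spheres `S^0 ⊆ S^1 ⊆ ⋯` with their antipodal map `ν`. -/
structure IsHemisphereTower (ν : V → V) (h : ℕ → Chain V) : Prop where
  isHomogeneous (k : ℕ) : (h k).IsHomogeneous (k + 1)
  boundary_zero : boundary (h 0) = 1
  boundary_succ (k : ℕ) : boundary (h (k + 1)) = h k + rename ν (h k)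

/-- The hemispheres of the octahedral spheres with vertices `e 0, ν (e 0), e 1, ν (e 1), …`. -/
noncomputable def octahedron (ν : V → V) (e : ℕ → V) : ℕ → Chain V
  | 0 => X (e 0)
  | k + 1 => X (e (k + 1)) * (octahedron ν e k + rename ν (octahedron ν e k))

theorem boundary_octahedron_add_rename {ν : V → V} (hν : Function.Involutive ν) (e : ℕ → V)
    (k : ℕ) :
    boundary (octahedron ν e k + rename ν (octahedron ν e k)) = 0 := by
  induction k with
  | zero =>
    simp [octahedron, boundary, mkDerivation_X, CharTwo.add_self_eq_zero]
  | succ k ih =>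
    rw [map_add, boundary_rename, octahedron, boundary_X_mul, ih, mul_zero, add_zero, map_add,
      rename_rename, hν.comp_self, rename_id_apply, add_comm (rename ν _),
      CharTwo.add_self_eq_zero]

theorem isHemisphereTower_octahedron {ν : V → V} (hν : Function.Involutive ν) (e : ℕ → V) :
    IsHemisphereTower ν (octahedron ν e) where
  isHomogeneous k := by
    induction k with
    | zero => exact isHomogeneous_X _ _
    | succ k ih =>
      rw [octahedron, add_comm (k + 1)]
      exact (isHomogeneous_X _ _).mul (ih.add ih.rename_isHomogeneous)
  boundary_zero := by simp [octahedron, boundary, mkDerivation_X]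
  boundary_succ k := by
    rw [octahedron, boundary_X_mul, boundary_octahedron_add_rename hν, mul_zero, add_zero]

/-- Barycentric subdivision of chains of degree `k`, where `b m` is the vertex to be placed at the
barycentre of the simplex `m`: the simplex is replaced by the cone over its subdivided boundary. -/
noncomputable def subdivide (b : (V →₀ ℕ) → V) : ℕ → Chain V →ₗ[ZMod 2] Chain V
  | 0 => LinearMap.id
  | k + 1 => (basisMonomials V (ZMod 2)).constr (ZMod 2) fun m =>
      X (b m) * subdivide b k (boundary (monomial m 1))

theorem subdivide_succ_monomial (b : (V →₀ ℕ) → V) (k : ℕ) (m : V →₀ ℕ) :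
    subdivide b (k + 1) (monomial m 1) = X (b m) * subdivide b k (boundary (monomial m 1)) := by
  rw [subdivide]
  simpa only [coe_basisMonomials] using (basisMonomials V (ZMod 2)).constr_basis (ZMod 2) _ m

theorem boundary_subdivide_succ (b : (V →₀ ℕ) → V) (k : ℕ) (c : Chain V) :
    boundary (subdivide b (k + 1) c) = subdivide b k (boundary c) := by
  suffices h : boundary.toLinearMap ∘ₗ subdivide b (k + 1) =
      subdivide b k ∘ₗ boundary.toLinearMap from LinearMap.congr_fun h c
  refine (basisMonomials V (ZMod 2)).ext fun m => ?_
  have boundary_eq_zero : boundary (subdivide b k (boundary (monomial m 1))) = 0 := by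
    cases k with
    | zero => exact boundary_boundary _
    | succ k => rw [boundary_subdivide_succ, boundary_boundary, map_zero]
  simp only [coe_basisMonomials, LinearMap.comp_apply, Derivation.coeFn_coe,
    subdivide_succ_monomial, boundary_X_mul, boundary_eq_zero, mul_zero, add_zero]

theorem subdivide_rename {b : (V →₀ ℕ) → V} {ν : V → V}
    (hb : ∀ m, b (m.mapDomain ν) = ν (b m)) (k : ℕ) (c : Chain V) :
    subdivide b k (rename ν c) = rename ν (subdivide b k c) := by
  induction k generalizing c with
  | zero => rfl
  | succ k ih =>
    suffices h : subdivide b (k + 1) ∘ₗ (rename ν).toLinearMap =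
        (rename ν).toLinearMap ∘ₗ subdivide b (k + 1) from LinearMap.congr_fun h c
    refine (basisMonomials V (ZMod 2)).ext fun m => ?_
    simp only [coe_basisMonomials, LinearMap.comp_apply, AlgHom.toLinearMap_apply, rename_monomial,
      subdivide_succ_monomial, map_mul, rename_X, hb]
    rw [← rename_monomial, boundary_rename, ih]

theorem exists_of_mem_support_subdivide_succ {b : (V →₀ ℕ) → V} {k : ℕ} {c : Chain V}
    {m : V →₀ ℕ} (hm : m ∈ (subdivide b (k + 1) c).support) :
    ∃ s ∈ c.support, ∃ t ∈ (subdivide b k (boundary (monomial s 1))).support,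
      m = Finsupp.single (b s) 1 + t := by
  obtain ⟨s, hs, hms⟩ := exists_mem_support_of_mem_support_map hm
  rw [subdivide_succ_monomial, support_X_mul] at hms
  obtain ⟨t, ht, rfl⟩ := Finset.mem_map.1 hms
  exact ⟨s, hs, t, ht, rfl⟩

theorem isHomogeneous_subdivide (b : (V →₀ ℕ) → V) {k : ℕ} {c : Chain V}
    (hc : c.IsHomogeneous k) : (subdivide b k c).IsHomogeneous k := by
  induction k generalizing c with
  | zero => exact hc
  | succ k ih =>
    rw [isHomogeneous_iff_degree_eq] at hc ⊢
    intro m hm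
    obtain ⟨s, hs, t, ht, rfl⟩ := exists_of_mem_support_subdivide_succ hm
    have degree_t : t.degree = k := isHomogeneous_iff_degree_eq.1
      (ih (isHomogeneous_boundary (isHomogeneous_monomial 1 (hc s hs)))) t ht
    rw [map_add, Finsupp.degree_single, degree_t, add_comm]

theorem IsHemisphereTower.subdivide {ν : V → V} {h : ℕ → Chain V} (hh : IsHemisphereTower ν h)
    {b : (V →₀ ℕ) → V} (hb : ∀ m, b (m.mapDomain ν) = ν (b m)) :
    IsHemisphereTower ν fun k => subdivide b (k + 1) (h k) where
  isHomogeneous k := isHomogeneous_subdivide b (hh.isHomogeneous k)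
  boundary_zero := by rw [boundary_subdivide_succ, hh.boundary_zero]; rfl
  boundary_succ k := by
    rw [boundary_subdivide_succ, hh.boundary_succ, map_add, subdivide_rename hb]

end Chains

/-! ### Tucker's lemma -/

section Alternating

variable {L : Type*} [LinearOrder L]

/-- The multiset `s`, listed in increasing order, has alternating signs, the first of which is `b`
unless `s` is empty. -/
def IsAlternating (sgn : L → Bool) (b : Bool) (s : Multiset L) : Prop :=
  ((!b) :: s.sort.map sgn).IsChain (· ≠ ·)

theorem isAlternating_zero (sgn : L → Bool) (b : Bool) : IsAlternating sgn b 0 := by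
  simp [IsAlternating]

theorem isAlternating_cons_iff {sgn : L → Bool} {b : Bool} {v : L} {s : Multiset L}
    (hv : ∀ w ∈ s, v ≤ w) :
    IsAlternating sgn b (v ::ₘ s) ↔ sgn v = b ∧ IsAlternating sgn (!b) s := by
  rw [IsAlternating, IsAlternating, Multiset.sort_cons _ _ _ hv, List.map_cons,
    List.isChain_cons_cons, Bool.not_not]
  cases b <;> cases sgn v <;> simp

open Classical in
/-- The cochain whose value on a simplex of signed vertices is `1` when its signs alternate starting
with `b`. -/
noncomputable def altCochain (sgn : L → Bool) (b : Bool) : Chain L →ₗ[ZMod 2] ZMod 2 :=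
  (basisMonomials L (ZMod 2)).constr (ZMod 2) fun m =>
    if IsAlternating sgn b m.toMultiset then 1 else 0

open Classical in
theorem altCochain_monomial (sgn : L → Bool) (b : Bool) (m : L →₀ ℕ) :
    altCochain sgn b (monomial m 1) = if IsAlternating sgn b m.toMultiset then 1 else 0 := by
  rw [altCochain]
  simpa only [coe_basisMonomials] using (basisMonomials L (ZMod 2)).constr_basis (ZMod 2) _ m

theorem altCochain_one (sgn : L → Bool) (b : Bool) : altCochain sgn b 1 = 1 := by
  rw [← C_1, ← monomial_zero', altCochain_monomial, map_zero, if_pos (isAlternating_zero sgn b)]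

theorem altCochain_X_mul {sgn : L → Bool} {v : L} {c : Chain L}
    (hv : ∀ m ∈ c.support, ∀ w ∈ m.support, v ≤ w) (b : Bool) :
    altCochain sgn b (X v * c) = if sgn v = b then altCochain sgn (!b) c else 0 := by
  suffices h : (altCochain sgn b ∘ₗ LinearMap.mulLeft _ (X v)) c =
      (if sgn v = b then altCochain sgn (!b) else 0) c by
    split_ifs at h ⊢ <;> exact h
  refine linearMap_congr_of_monomial fun m hm => ?_
  have isAlternating_iff := isAlternating_cons_iff (sgn := sgn) (b := b) (v := v)
    (s := m.toMultiset) fun w hw => hv m hm w ((Finsupp.mem_toMultiset m w).1 hw)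
  rw [LinearMap.comp_apply, LinearMap.mulLeft_apply, X, monomial_mul, one_mul, altCochain_monomial,
    map_add, Finsupp.toMultiset_single, one_smul, Multiset.singleton_add, isAlternating_iff]
  split_ifs <;> simp_all [altCochain_monomial]

theorem monomial_induction_on_min {P : (L →₀ ℕ) → Prop} (zero : P 0)
    (single_add : ∀ v m, (∀ w ∈ m.support, v ≤ w) → P m → P (Finsupp.single v 1 + m))
    (m : L →₀ ℕ) : P m := by
  induction m using Finsupp.induction_on_min with
  | zero => exact zero
  | single_add v k m hv _ hm =>
    clear * - single_add hv hm
    induction k with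
    | zero => simpa using hm
    | succ k ih =>
      rw [add_comm k, Finsupp.single_add, add_assoc]
      refine single_add v _ (fun w hw => ?_) ih
      rcases Finset.mem_union.1 (Finsupp.support_add hw) with h | h
      · rw [Finset.mem_singleton.1 (Finsupp.support_single_subset h)]
      · exact (hv w h).le

theorem altCochain_boundary (sgn : L → Bool) (b : Bool) (c : Chain L) :
    altCochain sgn b (boundary c) = altCochain sgn b c + altCochain sgn (!b) c := by
  suffices h : altCochain sgn b ∘ₗ boundary.toLinearMap =
      altCochain sgn b + altCochain sgn (!b) from LinearMap.congr_fun h c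
  refine (basisMonomials L (ZMod 2)).ext fun m => ?_
  simp only [coe_basisMonomials, LinearMap.comp_apply, LinearMap.add_apply, Derivation.coeFn_coe]
  induction m using monomial_induction_on_min generalizing b with
  | zero =>
    simp [monomial_zero', altCochain_one, CharTwo.add_self_eq_zero]
  | single_add v m hv ih =>
    have le_vertices : ∀ s ∈ (monomial m (1 : ZMod 2)).support, ∀ w ∈ s.support, v ≤ w := by
      intro s hs
      rwa [Finset.mem_singleton.1 (support_monomial_subset hs)]
    have le_face_vertices :
        ∀ s ∈ (boundary (monomial m (1 : ZMod 2))).support, ∀ w ∈ s.support, v ≤ w := by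
      intro s hs w hw
      obtain ⟨x, rfl⟩ := exists_face_of_mem_support_boundary_monomial hs
      exact hv w (Finsupp.support_mono le_self_add hw)
    have monomial_eq : monomial (Finsupp.single v 1 + m) (1 : ZMod 2) = X v * monomial m 1 := by
      rw [X, monomial_mul, one_mul]
    rw [monomial_eq, boundary_X_mul, map_add,
      altCochain_X_mul le_vertices, altCochain_X_mul le_vertices,
      altCochain_X_mul le_face_vertices, ih (!b), Bool.not_not]
    cases hvb : sgn v <;> cases b <;> grind [CharTwo.add_self_eq_zero]

end Alternating

section Tucker

variable {n : ℕ}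

/-- Tucker's labels `±1, …, ±n`, ordered by absolute value; the second component is the sign. -/
abbrev TuckerLabel (n : ℕ) : Type := Fin n ×ₗ Bool

namespace TuckerLabel

/-- The index of a Tucker label, that is, its absolute value. -/
def index (a : TuckerLabel n) : Fin n := (ofLex a).1

/-- The sign of a Tucker label. -/
def sign (a : TuckerLabel n) : Bool := (ofLex a).2

/-- The complementary Tucker label. -/
def flip (a : TuckerLabel n) : TuckerLabel n := toLex (a.index, !a.sign)

theorem index_flip (a : TuckerLabel n) : a.flip.index = a.index := rfl

theorem sign_flip (a : TuckerLabel n) : a.flip.sign = !a.sign := rfl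

theorem le_iff_index_lt_or {a b : TuckerLabel n} :
    a ≤ b ↔ a.index < b.index ∨ a.index = b.index ∧ a.sign ≤ b.sign :=
  Prod.Lex.le_iff

theorem sign_eq_of_index_eq {a b : TuckerLabel n} (hab : b ≠ a.flip) (hi : a.index = b.index) :
    a.sign = b.sign := by
  by_contra hs
  exact hab (toLex.symm.injective (Prod.ext hi.symm (Bool.eq_not.2 (Ne.symm hs))))

theorem flip_le_flip_iff {a b : TuckerLabel n} (hab : b ≠ a.flip) : a.flip ≤ b.flip ↔ a ≤ b := by
  simp only [le_iff_index_lt_or, sign_flip, index_flip]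
  refine or_congr_right (and_congr_right fun hi => ?_)
  simp only [sign_eq_of_index_eq hab hi, le_refl]

theorem isAlternating_map_flip_iff {s : Multiset (TuckerLabel n)}
    (hs : ∀ a ∈ s, ∀ b ∈ s, b ≠ a.flip) (b : Bool) :
    IsAlternating sign b (s.map flip) ↔ IsAlternating sign (!b) s := by
  have sort_map : s.sort.map flip = (s.map flip).sort :=
    Multiset.map_sort _ _ _ _ fun x hx y hy => (flip_le_flip_iff (hs x hx y hy)).symm
  have map_not : (!b) :: (s.map flip).sort.map sign = ((!!b) :: s.sort.map sign).map (!·) := by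
    simp [← sort_map, sign_flip]
  rw [IsAlternating, IsAlternating, map_not, List.isChain_map]
  simp only [ne_eq, Bool.not_inj_iff]

theorem card_le_of_isAlternating {s : Multiset (TuckerLabel n)}
    (hs : ∀ a ∈ s, ∀ b ∈ s, b ≠ a.flip) {b : Bool} (halt : IsAlternating sign b s) :
    Multiset.card s ≤ n := by
  have isChain_sign : s.sort.IsChain fun a b => a.sign ≠ b.sign :=
    (List.isChain_map _).1 (List.isChain_cons.1 halt).2
  have isChain_le : s.sort.IsChain (· ≤ ·) := (s.pairwise_sort (· ≤ ·)).isChain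
  have isChain_index : s.sort.IsChain fun a b => a.index < b.index := by
    rw [List.isChain_iff_getElem] at isChain_sign isChain_le ⊢
    intro i hi
    refine (le_iff_index_lt_or.1 (isChain_le i hi)).resolve_right fun h =>
      isChain_sign i hi (sign_eq_of_index_eq (hs _ ?_ _ ?_) h.1) <;>
    exact (Multiset.mem_sort _).1 (List.getElem_mem _)
  have nodup_index : (s.sort.map index).Nodup :=
    ((List.isChain_map index).2 isChain_index).pairwise.imp ne_of_lt
  simpa using nodup_index.length_le_card

end TuckerLabel

open TuckerLabel

theorem altCochain_rename_eq_zero {V : Type*} {label : V → TuckerLabel n} {c : Chain V}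
    (hc : c.IsHomogeneous (n + 1))
    (hlabel : ∀ m ∈ c.support, ∀ v ∈ m.support, ∀ w ∈ m.support, label w ≠ (label v).flip)
    (b : Bool) : altCochain sign b (rename label c) = 0 := by
  suffices h : (altCochain sign b ∘ₗ (rename label).toLinearMap) c =
      (0 : Chain V →ₗ[ZMod 2] ZMod 2) c from h
  refine linearMap_congr_of_monomial fun m hm => ?_
  rw [LinearMap.comp_apply, AlgHom.toLinearMap_apply, rename_monomial, altCochain_monomial,
    LinearMap.zero_apply, if_neg]
  intro halt
  rw [← Finsupp.toMultiset_map] at halt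
  have card_le := card_le_of_isAlternating (by simpa using hlabel m hm) halt
  have degree_eq := isHomogeneous_iff_degree_eq.1 hc m hm
  rw [Multiset.card_map, Finsupp.card_toMultiset] at card_le
  exact n.not_succ_le_self (degree_eq.symm.trans_le card_le)

theorem altCochain_rename_antipode {V : Type*} {ν : V → V} {label : V → TuckerLabel n} {c : Chain V}
    (hν : ∀ m ∈ c.support, ∀ v ∈ m.support, label (ν v) = (label v).flip)
    (hlabel : ∀ m ∈ c.support, ∀ v ∈ m.support, ∀ w ∈ m.support, label w ≠ (label v).flip)
    (b : Bool) :
    altCochain sign b (rename label (rename ν c)) = altCochain sign (!b) (rename label c) := by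
  rw [rename_rename]
  suffices h : (altCochain sign b ∘ₗ (rename (label ∘ ν)).toLinearMap) c =
      (altCochain sign (!b) ∘ₗ (rename label).toLinearMap) c from h
  refine linearMap_congr_of_monomial fun m hm => ?_
  have map_flip : (m.mapDomain (label ∘ ν)).toMultiset = (m.toMultiset.map label).map flip := by
    rw [← Finsupp.toMultiset_map, Multiset.map_map]
    exact Multiset.map_congr rfl fun v hv => hν m hm v ((Finsupp.mem_toMultiset m v).1 hv)
  have isAlternating_iff : IsAlternating sign b (m.mapDomain (label ∘ ν)).toMultiset ↔
      IsAlternating sign (!b) (m.mapDomain label).toMultiset := by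
    rw [map_flip, ← Finsupp.toMultiset_map]
    exact isAlternating_map_flip_iff (by simpa using hlabel m hm) b
  simp only [LinearMap.comp_apply, AlgHom.toLinearMap_apply, rename_monomial, altCochain_monomial]
  classical exact if_congr isAlternating_iff rfl rfl

theorem tucker {V : Type*} {ν : V → V} {h : ℕ → Chain V} (hh : IsHemisphereTower ν h)
    {label : V → TuckerLabel n}
    (hν : ∀ k ≤ n, ∀ m ∈ (h k).support, ∀ v ∈ m.support, label (ν v) = (label v).flip) :
    ∃ k ≤ n, ∃ m ∈ (h k).support, ∃ v ∈ m.support, ∃ w ∈ m.support,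
      label w = (label v).flip := by
  by_contra! hlabel
  have sum_eq_one : ∀ k ≤ n, ∀ b, altCochain sign b (rename label (h k)) +
      altCochain sign (!b) (rename label (h k)) = 1 := by
    intro k hk b
    rw [← altCochain_boundary, boundary_rename]
    induction k generalizing b with
    | zero => rw [hh.boundary_zero, map_one, altCochain_one]
    | succ k ih =>
      have hk := (Nat.le_succ k).trans hk
      rw [hh.boundary_succ, map_add, map_add,
        altCochain_rename_antipode (hν k hk) (hlabel k hk), ← altCochain_boundary,
        boundary_rename, ih hk]
  have eq_zero := altCochain_rename_eq_zero (hh.isHomogeneous n) (hlabel n le_rfl)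
  simpa [eq_zero] using sum_eq_one n le_rfl true

end Tucker

/-! ### The mesh of barycentric subdivisions -/

section Mesh

variable {E : Type*} [NormedAddCommGroup E] [NormedSpace ℝ E]

/-- The barycentre of a simplex given by its multiset of vertices. -/
noncomputable def barycenter (m : E →₀ ℕ) : E :=
  (m.degree : ℝ)⁻¹ • m.sum fun v k => (k : ℝ) • v

theorem barycenter_mapDomain_neg (m : E →₀ ℕ) :
    barycenter (m.mapDomain Neg.neg) = -barycenter m := by
  rw [barycenter, barycenter, Finsupp.degree_mapDomain, Finsupp.sum_mapDomain_index
    (fun _ => by simp) (fun _ _ _ => by push_cast; rw [add_smul])]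
  simp [Finsupp.sum]

theorem barycenter_mem_convexHull {m : E →₀ ℕ} (hm : m ≠ 0) :
    barycenter m ∈ convexHull ℝ (m.support : Set E) := by
  have centerMass_eq : m.support.centerMass (fun v => (m v : ℝ)) id = barycenter m := by
    simp [barycenter, Finset.centerMass, Finsupp.degree_apply, Finsupp.sum]
  rw [← centerMass_eq]
  refine Finset.centerMass_mem_convexHull _ (fun _ _ => Nat.cast_nonneg _) ?_ fun v hv => hv
  rw [← Nat.cast_sum, ← Finsupp.degree_apply, Nat.cast_pos, Nat.pos_iff_ne_zero]
  exact (Finsupp.degree_eq_zero_iff m).not.2 hm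

theorem dist_barycenter_le {m : E →₀ ℕ} {k : ℕ} (hm : m.degree = k + 1) {v : E} {d : ℝ}
    (hv : v ∈ m.support) (hd : ∀ w ∈ m.support, dist w v ≤ d) :
    dist (barycenter m) v ≤ k / (k + 1) * d := by
  obtain ⟨s, rfl⟩ : ∃ s, m = Finsupp.single v 1 + s :=
    exists_add_of_le (Finsupp.single_le_iff.2
      (Nat.one_le_iff_ne_zero.2 (Finsupp.mem_support_iff.1 hv)))
  have degree_s : s.degree = k := by
    rwa [map_add, Finsupp.degree_single, add_comm, add_left_inj] at hm
  have sub_eq : barycenter (Finsupp.single v 1 + s) - v =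
      ((k : ℝ) + 1)⁻¹ • s.sum fun w j => (j : ℝ) • (w - v) := by
    have sum_smul_v : (s.sum fun _ j => (j : ℝ) • v) = (k : ℝ) • v := by
      rw [Finsupp.sum, ← Finset.sum_smul, ← degree_s, Finsupp.degree_apply, Nat.cast_sum]
    have hk : (k : ℝ) + 1 ≠ 0 := by positivity
    rw [barycenter, hm, Finsupp.sum_add_index' (by simp) (by simp [add_smul]),
      Finsupp.sum_single_index (by simp)]
    simp only [smul_sub, Finsupp.sum_sub, sum_smul_v]
    rw [← smul_sub, eq_inv_smul_iff₀ hk, smul_sub, Nat.cast_add_one, smul_inv_smul₀ hk,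
      Nat.cast_one, add_smul]
    abel
  have norm_sum_le : ‖s.sum fun w j => (j : ℝ) • (w - v)‖ ≤ k * d := by
    rw [← degree_s, Finsupp.degree_apply, Nat.cast_sum, Finset.sum_mul]
    refine norm_sum_le_of_le _ fun w hw => ?_
    rw [norm_smul, Real.norm_natCast, ← dist_eq_norm]
    exact mul_le_mul_of_nonneg_left (hd w (Finsupp.support_mono le_add_self hw)) (Nat.cast_nonneg _)
  rw [dist_eq_norm, sub_eq, norm_smul, norm_inv, Real.norm_of_nonneg (by positivity),
    div_mul_eq_mul_div, inv_mul_eq_div]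
  gcongr

theorem dist_barycenter_le_of_mem_convexHull {m : E →₀ ℕ} {k : ℕ} (hm : m.degree = k + 1) {x : E}
    (hx : x ∈ convexHull ℝ (m.support : Set E)) :
    dist (barycenter m) x ≤ k / (k + 1) * Metric.diam (m.support : Set E) := by
  suffices h : convexHull ℝ (m.support : Set E) ⊆
      Metric.closedBall (barycenter m) (k / (k + 1) * Metric.diam (m.support : Set E)) from
    Metric.mem_closedBall'.1 (h hx)
  refine convexHull_min (fun v hv => Metric.mem_closedBall'.2 ?_) (convex_closedBall _ _)
  exact dist_barycenter_le hm hv fun w hw =>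
    Metric.dist_le_diam_of_mem m.support.finite_toSet.isBounded hw hv

theorem diam_support_single_barycenter_add_le {s t : E →₀ ℕ} {k : ℕ} (hs : s.degree = k + 1)
    (hts : (t.support : Set E) ⊆ convexHull ℝ (s.support : Set E))
    (ht : Metric.diam (t.support : Set E) ≤ k / (k + 1) * Metric.diam (s.support : Set E)) :
    Metric.diam ((Finsupp.single (barycenter s) 1 + t).support : Set E) ≤
      k / (k + 1) * Metric.diam (s.support : Set E) := by
  classical
  have dist_le := fun v hv => dist_barycenter_le_of_mem_convexHull hs (hts hv : v ∈ _)
  refine Metric.diam_le_of_forall_dist_le (by positivity) fun v hv w hw => ?_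
  rw [Finset.mem_coe, Finsupp.support_add_eq_union, Finsupp.support_single _ one_ne_zero,
    Finset.mem_union, Finset.mem_singleton] at hv hw
  rcases hv with rfl | hv <;> rcases hw with rfl | hw
  · simpa using (by positivity : 0 ≤ k / (k + 1) * Metric.diam (s.support : Set E))
  · exact dist_le w hw
  · exact (dist_comm _ _).trans_le (dist_le v hv)
  · exact (Metric.dist_le_diam_of_mem t.support.finite_toSet.isBounded hv hw).trans ht

theorem support_single_barycenter_add_subset {s t : E →₀ ℕ} (hs : s ≠ 0)
    (hts : (t.support : Set E) ⊆ convexHull ℝ (s.support : Set E)) :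
    ((Finsupp.single (barycenter s) 1 + t).support : Set E) ⊆ convexHull ℝ (s.support : Set E) := by
  classical
  rw [Finsupp.support_add_eq_union, Finsupp.support_single _ one_ne_zero, Finset.coe_union,
    Finset.coe_singleton]
  exact Set.union_subset (Set.singleton_subset_iff.2 (barycenter_mem_convexHull hs)) hts

theorem natCast_div_add_one_mono : Monotone fun k : ℕ => (k : ℝ) / (k + 1) := by
  intro k l hkl
  rw [div_le_div_iff₀ (by positivity) (by positivity)]
  have cast_le : (k : ℝ) ≤ l := Nat.cast_le.2 hkl
  linarith

theorem subset_convexHull_and_diam_le_of_mem_support_subdivide {k : ℕ} {s t : E →₀ ℕ}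
    (hs : s.degree = k + 1)
    (ht : t ∈ (subdivide barycenter (k + 1) (monomial s (1 : ZMod 2))).support) :
    (t.support : Set E) ⊆ convexHull ℝ (s.support : Set E) ∧
      Metric.diam (t.support : Set E) ≤ k / (k + 1) * Metric.diam (s.support : Set E) := by
  rw [subdivide_succ_monomial, support_X_mul] at ht
  obtain ⟨t', ht', rfl⟩ := Finset.mem_map.1 ht
  have s_ne_zero : s ≠ 0 := by rintro rfl; simp at hs
  suffices h : (t'.support : Set E) ⊆ convexHull ℝ (s.support : Set E) ∧
      Metric.diam (t'.support : Set E) ≤ k / (k + 1) * Metric.diam (s.support : Set E) from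
    ⟨support_single_barycenter_add_subset s_ne_zero h.1,
      diam_support_single_barycenter_add_le hs h.1 h.2⟩
  have homogeneous_boundary := isHomogeneous_boundary (isHomogeneous_monomial (1 : ZMod 2) hs)
  cases k with
  | zero =>
    have degree_t' : t'.degree = 0 := isHomogeneous_iff_degree_eq.1 homogeneous_boundary t' ht'
    obtain rfl := (Finsupp.degree_eq_zero_iff t').1 degree_t'
    simp
  | succ k =>
    obtain ⟨s', hs', hts'⟩ := exists_mem_support_of_mem_support_map ht'
    obtain ⟨subset_hull, diam_le⟩ := subset_convexHull_and_diam_le_of_mem_support_subdivide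
      (isHomogeneous_iff_degree_eq.1 homogeneous_boundary s' hs') hts'
    obtain ⟨v, rfl⟩ := exists_face_of_mem_support_boundary_monomial hs'
    have support_subset : (s'.support : Set E) ⊆ (s' + Finsupp.single v 1).support :=
      Finset.coe_subset.2 (Finsupp.support_mono le_self_add)
    refine ⟨subset_hull.trans (convexHull_mono support_subset), diam_le.trans ?_⟩
    exact mul_le_mul (natCast_div_add_one_mono k.le_succ)
      (Metric.diam_mono support_subset (Finset.finite_toSet _).isBounded)
      Metric.diam_nonneg (by positivity)

/-- Every simplex of `c` is contained in `K` and has diameter at most `d`. -/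
def IsFineIn (K : Set E) (d : ℝ) (c : Chain E) : Prop :=
  ∀ m ∈ c.support, convexHull ℝ (m.support : Set E) ⊆ K ∧ Metric.diam (m.support : Set E) ≤ d

theorem IsFineIn.subdivide {K : Set E} {d : ℝ} {c : Chain E} (hc : IsFineIn K d c) {k : ℕ}
    (hk : c.IsHomogeneous (k + 1)) :
    IsFineIn K (k / (k + 1) * d) (subdivide barycenter (k + 1) c) := by
  intro t ht
  obtain ⟨s, hs, hts⟩ := exists_mem_support_of_mem_support_map ht
  obtain ⟨hts, hdiam⟩ := subset_convexHull_and_diam_le_of_mem_support_subdivide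
    (isHomogeneous_iff_degree_eq.1 hk s hs) hts
  refine ⟨(convexHull_min hts (convex_convexHull ℝ _)).trans (hc s hs).1, hdiam.trans ?_⟩
  gcongr
  exact (hc s hs).2

theorem IsFineIn.mono {K : Set E} {d d' : ℝ} {c : Chain E} (hc : IsFineIn K d c) (h : d ≤ d') :
    IsFineIn K d' c :=
  fun m hm => ⟨(hc m hm).1, (hc m hm).2.trans h⟩

theorem exists_isHemisphereTower_isFineIn {K : Set E} {h : ℕ → Chain E}
    (hh : IsHemisphereTower Neg.neg h) {n : ℕ} {d : ℝ} (hd : 0 ≤ d)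
    (hK : ∀ k ≤ n, IsFineIn K d (h k)) {δ : ℝ} (hδ : 0 < δ) :
    ∃ h' : ℕ → Chain E, IsHemisphereTower Neg.neg h' ∧ ∀ k ≤ n, IsFineIn K δ (h' k) := by
  set r : ℝ := n / (n + 1)
  have iterate (j : ℕ) : ∃ h' : ℕ → Chain E, IsHemisphereTower Neg.neg h' ∧
      ∀ k ≤ n, IsFineIn K (r ^ j * d) (h' k) := by
    induction j with
    | zero => exact ⟨h, hh, by simpa using hK⟩
    | succ j ih =>
      obtain ⟨h', hh', hK'⟩ := ih
      refine ⟨_, hh'.subdivide barycenter_mapDomain_neg, fun k hk =>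
        ((hK' k hk).subdivide (hh'.isHomogeneous k)).mono ?_⟩
      rw [pow_succ', mul_assoc]
      gcongr
      exact natCast_div_add_one_mono hk
  have tendsto_zero : Filter.Tendsto (fun j => r ^ j * d) Filter.atTop (nhds 0) := by
    have r_lt_one : r < 1 := (div_lt_one (by positivity)).2 (lt_add_one _)
    simpa using (tendsto_pow_atTop_nhds_zero_of_lt_one (by positivity) r_lt_one).mul_const d
  obtain ⟨j, hj⟩ := (tendsto_zero.eventually_le_const hδ).exists
  obtain ⟨h', hh', hK'⟩ := iterate j
  exact ⟨h', hh', fun k hk => (hK' k hk).mono hj⟩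

end Mesh

/-! ### The Borsuk–Ulam theorem -/

section DominantLabel

variable {n : ℕ} [Nonempty (Fin n)]

/-- An index of a coordinate of largest absolute value; it depends only on the absolute values of
the coordinates, hence is the same for `y` and `-y`. -/
noncomputable def dominantIndex (y : Fin n → ℝ) : Fin n :=
  Classical.epsilon fun i => ‖y‖ = |y i|

/-- The Tucker label recording a largest coordinate and its sign. -/
noncomputable def dominantLabel (y : Fin n → ℝ) : TuckerLabel n :=
  toLex (dominantIndex y, decide (0 < y (dominantIndex y)))

theorem abs_apply_dominantIndex (y : Fin n → ℝ) : |y (dominantIndex y)| = ‖y‖ := by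
  obtain ⟨i, hi⟩ := Finite.exists_max fun i => |y i|
  have norm_eq : ‖y‖ = |y i| :=
    le_antisymm ((pi_norm_le_iff_of_nonneg (abs_nonneg _)).2 hi) (norm_le_pi_norm y i)
  exact (Classical.epsilon_spec (p := fun i => ‖y‖ = |y i|) ⟨i, norm_eq⟩).symm

theorem dominantIndex_neg (y : Fin n → ℝ) : dominantIndex (-y) = dominantIndex y := by
  simp only [dominantIndex, norm_neg, Pi.neg_apply, abs_neg]

theorem dominantLabel_neg {y : Fin n → ℝ} (hy : y ≠ 0) :
    dominantLabel (-y) = (dominantLabel y).flip := by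
  have apply_ne_zero : y (dominantIndex y) ≠ 0 := by
    rwa [← abs_ne_zero, abs_apply_dominantIndex, norm_ne_zero_iff]
  have pos_neg_iff : 0 < -y (dominantIndex y) ↔ ¬0 < y (dominantIndex y) := by
    rw [neg_pos, not_lt, apply_ne_zero.le_iff_lt]
  simp only [dominantLabel, dominantIndex_neg, Pi.neg_apply, pos_neg_iff, decide_not]
  rfl

theorem norm_le_dist_of_dominantLabel_eq_flip {y z : Fin n → ℝ}
    (h : dominantLabel z = (dominantLabel y).flip) : ‖y‖ ≤ dist y z := by
  have index_eq : dominantIndex z = dominantIndex y := congrArg TuckerLabel.index h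
  have sign_eq : decide (0 < z (dominantIndex z)) = !decide (0 < y (dominantIndex y)) :=
    congrArg TuckerLabel.sign h
  rw [index_eq, ← decide_not, decide_eq_decide] at sign_eq
  rw [← abs_apply_dominantIndex]
  refine le_trans ?_ (dist_le_pi_dist y z (dominantIndex y))
  rw [Real.dist_eq]
  rcases le_or_gt (y (dominantIndex y)) 0 with hy | hy
  · have hz := sign_eq.2 hy.not_gt
    rw [abs_of_nonpos hy, abs_of_nonpos (by linarith)]
    linarith
  · have hz := not_lt.1 fun hz => sign_eq.1 hz hy
    rw [abs_of_pos hy, abs_of_pos (by linarith)]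
    linarith

end DominantLabel

section Carrier

variable {E : Type*} [AddCommGroup E] [Module ℝ E] {K L : Set E} {c : Chain E}

/-- Every simplex of `c` is contained in `K`. -/
def IsCarriedBy (K : Set E) (c : Chain E) : Prop :=
  ∀ m ∈ c.support, convexHull ℝ (m.support : Set E) ⊆ K

theorem IsCarriedBy.mono (hc : IsCarriedBy K c) (h : K ⊆ L) : IsCarriedBy L c :=
  fun m hm => (hc m hm).trans h

theorem IsCarriedBy.add_rename_neg (hc : IsCarriedBy K c) (hK : -K = K) :
    IsCarriedBy K (c + rename Neg.neg c) := by
  classical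
  intro m hm
  rcases Finset.mem_union.1 (support_add hm) with hm | hm
  · exact hc m hm
  · rw [support_rename_of_injective neg_injective] at hm
    obtain ⟨s, hs, rfl⟩ := Finset.mem_image.1 hm
    rw [Finsupp.mapDomain_support_of_injective neg_injective, Finset.coe_image,
      Set.image_neg_eq_neg, convexHull_neg, Set.neg_subset, hK]
    exact hc s hs

theorem IsCarriedBy.isFineIn_diam {E : Type*} [NormedAddCommGroup E] [NormedSpace ℝ E] {K : Set E}
    {c : Chain E} (hc : IsCarriedBy K c) (hK : Bornology.IsBounded K) :
    IsFineIn K (Metric.diam K) c :=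
  fun m hm => ⟨hc m hm, Metric.diam_mono ((subset_convexHull ℝ _).trans (hc m hm)) hK⟩

end Carrier

section Octahedron

variable {n k : ℕ}

/-- The `k`-th vector of the standard basis of `ℓ¹`, or zero if `k` is out of range. -/
noncomputable def l1Basis (n k : ℕ) : PiLp 1 fun _ : Fin (n + 1) => ℝ :=
  WithLp.toLp 1 fun i => if (i : ℕ) = k then 1 else 0

/-- The `k`-dimensional unit sphere of `ℓ¹`, in the span of the first `k + 1` coordinates. -/
def l1Sphere (n k : ℕ) : Set (PiLp 1 fun _ : Fin (n + 1) => ℝ) :=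
  {x | ‖x‖ = 1 ∧ ∀ i, k < i.val → x i = 0}

theorem neg_l1Sphere : -l1Sphere n k = l1Sphere n k := by
  ext x
  simp [l1Sphere]

theorem norm_smul_l1Basis_add_smul (hk : k ≤ n) {x : PiLp 1 fun _ : Fin (n + 1) => ℝ}
    (hx : ∀ i, k ≤ i.val → x i = 0) {a b : ℝ} (ha : 0 ≤ a) (hb : 0 ≤ b) :
    ‖a • l1Basis n k + b • x‖ = a + b * ‖x‖ := by
  have norm_apply (i : Fin (n + 1)) : ‖(a • l1Basis n k + b • x) i‖ =
      (if i = ⟨k, Nat.lt_succ_of_le hk⟩ then a else 0) + b * ‖x i‖ := by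
    by_cases hi : (i : ℕ) = k
    · simp [l1Basis, Fin.ext_iff, hi, hx i hi.ge, abs_of_nonneg ha]
    · simp [l1Basis, Fin.ext_iff, hi, abs_of_nonneg hb]
  rw [PiLp.norm_eq_of_L1, PiLp.norm_eq_of_L1, Finset.sum_congr rfl fun i _ => norm_apply i,
    Finset.sum_add_distrib, ← Finset.mul_sum, Finset.sum_ite_eq' Finset.univ,
    if_pos (Finset.mem_univ _)]

theorem l1Basis_mem_l1Sphere (hk : k ≤ n) : l1Basis n k ∈ l1Sphere n k := by
  refine ⟨?_, fun i hi => if_neg hi.ne'⟩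
  simpa using norm_smul_l1Basis_add_smul hk (x := 0) (fun _ _ => rfl) zero_le_one zero_le_one

theorem convexHull_insert_l1Basis_subset (hk : k + 1 ≤ n)
    {S : Set (PiLp 1 fun _ : Fin (n + 1) => ℝ)} (hS : convexHull ℝ S ⊆ l1Sphere n k) :
    convexHull ℝ (insert (l1Basis n (k + 1)) S) ⊆ l1Sphere n (k + 1) := by
  rcases S.eq_empty_or_nonempty with rfl | S_nonempty
  · simpa using l1Basis_mem_l1Sphere hk
  rw [convexHull_insert S_nonempty, convexJoin_singleton_left]
  refine Set.iUnion₂_subset fun y hy => ?_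
  obtain ⟨norm_y, y_eq_zero⟩ := hS hy
  rintro _ ⟨a, b, ha, hb, hab, rfl⟩
  refine ⟨?_, fun i hi => ?_⟩
  · rw [norm_smul_l1Basis_add_smul hk y_eq_zero ha hb, norm_y, mul_one, hab]
  · simp [l1Basis, hi.ne', y_eq_zero i (k.lt_succ_self.trans hi)]

theorem isCarriedBy_octahedron (hk : k ≤ n) :
    IsCarriedBy (l1Sphere n k) (octahedron Neg.neg (l1Basis n) k) := by
  classical
  induction k with
  | zero =>
    intro m hm
    rw [octahedron, support_X, Finset.mem_singleton] at hm
    simpa [hm, Finsupp.support_single] using l1Basis_mem_l1Sphere hk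
  | succ k ih =>
    intro m hm
    rw [octahedron, support_X_mul] at hm
    obtain ⟨s, hs, rfl⟩ := Finset.mem_map.1 hm
    rw [addLeftEmbedding_apply, Finsupp.support_add_eq_union,
      Finsupp.support_single _ one_ne_zero, ← Finset.insert_eq, Finset.coe_insert]
    exact convexHull_insert_l1Basis_subset hk
      ((ih (Nat.le_of_succ_le hk)).add_rename_neg neg_l1Sphere s hs)

end Octahedron

section BorsukUlam

theorem exists_eq_zero_of_isHemisphereTower {E : Type*} [NormedAddCommGroup E] [NormedSpace ℝ E]
    {K : Set E} (hK : IsCompact K) {n : ℕ} [Nonempty (Fin n)] {h : ℕ → Chain E}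
    (hh : IsHemisphereTower Neg.neg h) (hhK : ∀ k ≤ n, IsCarriedBy K (h k)) {g : E → Fin n → ℝ}
    (hg : ContinuousOn g K) (hodd : ∀ x ∈ K, g (-x) = -g x) : ∃ x ∈ K, g x = 0 := by
  by_contra! g_ne_zero
  obtain ⟨ε, ε_pos, hε⟩ : ∃ ε > 0, ∀ x ∈ K, ε ≤ ‖g x‖ :=
    hK.exists_forall_le' (f := fun x => ‖g x‖) hg.norm fun x hx => norm_pos_iff.2 (g_ne_zero x hx)
  obtain ⟨δ, δ_pos, hδ⟩ :=
    Metric.uniformContinuousOn_iff.1 (hK.uniformContinuousOn_of_continuous hg) ε ε_pos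
  obtain ⟨h', hh', hfine⟩ := exists_isHemisphereTower_isFineIn hh Metric.diam_nonneg
    (fun k hk => (hhK k hk).isFineIn_diam hK.isBounded) (half_pos δ_pos)
  have vertex_mem {k : ℕ} (hk : k ≤ n) {m : E →₀ ℕ} (hm : m ∈ (h' k).support) {v : E}
      (hv : v ∈ m.support) : v ∈ K :=
    (hfine k hk m hm).1 (subset_convexHull ℝ _ hv)
  obtain ⟨k, hk, m, hm, v, hv, w, hw, hvw⟩ := tucker (label := fun x => dominantLabel (g x)) hh'
    fun k hk m hm v hv => by
      have hvK := vertex_mem hk hm hv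
      rw [hodd v hvK, dominantLabel_neg (g_ne_zero v hvK)]
  have hvK := vertex_mem hk hm hv
  have dist_lt : dist v w < δ :=
    ((Metric.dist_le_diam_of_mem m.support.finite_toSet.isBounded hv hw).trans
      (hfine k hk m hm).2).trans_lt (half_lt_self δ_pos)
  exact (hδ v hvK w (vertex_mem hk hm hw) dist_lt).not_ge
    ((hε v hvK).trans (norm_le_dist_of_dominantLabel_eq_flip hvw))

theorem exists_mem_l1_sphere_eq_zero {n : ℕ} [Nonempty (Fin n)]
    {g : (PiLp 1 fun _ : Fin (n + 1) => ℝ) → Fin n → ℝ} (hg : ContinuousOn g (Metric.sphere 0 1))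
    (hodd : ∀ x ∈ Metric.sphere 0 1, g (-x) = -g x) : ∃ x ∈ Metric.sphere 0 1, g x = 0 :=
  exists_eq_zero_of_isHemisphereTower (isCompact_sphere 0 1)
    (isHemisphereTower_octahedron neg_involutive (l1Basis n))
    (fun _ hk => (isCarriedBy_octahedron hk).mono fun _ hx => mem_sphere_zero_iff_norm.2 hx.1)
    hg hodd

theorem borsuk_ulam {E : Type*} [NormedAddCommGroup E] [NormedSpace ℝ E] {n : ℕ}
    (hE : Module.finrank ℝ E = n + 1) {g : E → Fin n → ℝ}
    (hg : ContinuousOn g (Metric.sphere 0 1)) (hodd : ∀ x ∈ Metric.sphere 0 1, g (-x) = -g x) :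
    ∃ x ∈ Metric.sphere 0 1, g x = 0 := by
  rcases isEmpty_or_nonempty (Fin n) with _ | _
  · have : Nontrivial E := Module.nontrivial_of_finrank_eq_succ hE
    obtain ⟨x, hx⟩ := NormedSpace.sphere_nonempty (x := (0 : E)).2 zero_le_one
    exact ⟨x, hx, Subsingleton.elim _ _⟩
  have : FiniteDimensional ℝ E := Module.finite_of_finrank_eq_succ hE
  let φ : (PiLp 1 fun _ : Fin (n + 1) => ℝ) ≃L[ℝ] E :=
    ContinuousLinearEquiv.ofFinrankEq <| by
      rw [hE, (WithLp.linearEquiv 1 ℝ (Fin (n + 1) → ℝ)).finrank_eq, Module.finrank_fin_fun]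
  have norm_φ_ne_zero {x} (hx : x ∈ Metric.sphere 0 1) : ‖φ x‖ ≠ 0 :=
    norm_ne_zero_iff.2 (φ.map_ne_zero_iff.2 (ne_zero_of_mem_unit_sphere ⟨x, hx⟩))
  have mapsTo : Set.MapsTo (fun x => ‖φ x‖⁻¹ • φ x) (Metric.sphere 0 1) (Metric.sphere 0 1) :=
    fun x hx => by
      rw [mem_sphere_zero_iff_norm, norm_smul, norm_inv, norm_norm,
        inv_mul_cancel₀ (norm_φ_ne_zero hx)]
  have continuousOn : ContinuousOn (fun x => ‖φ x‖⁻¹ • φ x) (Metric.sphere 0 1) :=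
    (φ.continuous.norm.continuousOn.inv₀ fun _ => norm_φ_ne_zero).smul φ.continuous.continuousOn
  obtain ⟨x, hx, h⟩ := exists_mem_l1_sphere_eq_zero (hg.comp continuousOn mapsTo) fun x hx => by
    simpa using hodd _ (mapsTo hx)
  exact ⟨_, mapsTo hx, h⟩

end BorsukUlam

/-! ### Continuity of diameters -/

section DiamImage

variable {X U M : Type*} [TopologicalSpace X] [CompactSpace X] [TopologicalSpace U]
  [PseudoMetricSpace M] {F : X → U → M} {K : U → Set X}

theorem isBounded_image_of_continuous_uncurry (hF : Continuous (Function.uncurry F)) (u : U)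
    (S : Set X) : Bornology.IsBounded ((F · u) '' S) :=
  (isCompact_range (hF.comp (Continuous.prodMk_left u))).isBounded.subset
    (Set.image_subset_range _ _)

theorem upperSemicontinuous_diam_image (hF : Continuous (Function.uncurry F))
    (hK : IsClosed {p : U × X | p.2 ∈ K p.1}) :
    UpperSemicontinuous fun u => Metric.diam ((F · u) '' K u) := by
  intro u r hr
  obtain ⟨s, hs, hsr⟩ := exists_between hr
  have isOpen_bound : IsOpen {q : U × X × X |
      q.2.1 ∈ K q.1 → q.2.2 ∈ K q.1 → dist (F q.2.1 q.1) (F q.2.2 q.1) < s} := by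
    simp only [imp_iff_not_or, Set.ofPred_or]
    refine .union ?_ (.union ?_ (isOpen_lt (.dist ?_ ?_) continuous_const))
    · exact hK.isOpen_compl.preimage (by fun_prop : Continuous fun q : U × X × X => (q.1, q.2.1))
    · exact hK.isOpen_compl.preimage (by fun_prop : Continuous fun q : U × X × X => (q.1, q.2.2))
    · exact hF.comp (by fun_prop : Continuous fun q : U × X × X => (q.2.1, q.1))
    · exact hF.comp (by fun_prop : Continuous fun q : U × X × X => (q.2.2, q.1))
  have eventually_dist_lt : ∀ᶠ v in 𝓝 u, ∀ p ∈ (Set.univ : Set (X × X)),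
      p.1 ∈ K v → p.2 ∈ K v → dist (F p.1 v) (F p.2 v) < s := by
    refine isCompact_univ.eventually_forall_of_forall_eventually fun p _ =>
      isOpen_bound.mem_nhds fun h₁ h₂ => ?_
    exact (Metric.dist_le_diam_of_mem (isBounded_image_of_continuous_uncurry hF u _)
      (Set.mem_image_of_mem _ h₁) (Set.mem_image_of_mem _ h₂)).trans_lt hs
  filter_upwards [eventually_dist_lt] with v hv
  refine (Metric.diam_le_of_forall_dist_le (Metric.diam_nonneg.trans hs.le) ?_).trans_lt hsr
  rintro _ ⟨x, hx, rfl⟩ _ ⟨y, hy, rfl⟩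
  exact (hv (x, y) trivial hx hy).le

theorem lowerSemicontinuous_diam_image (hF : Continuous (Function.uncurry F))
    (hK : ∀ u, (K u).Subsingleton ∨ K u ⊆ closure {x | ∀ᶠ v in 𝓝 u, x ∈ K v}) :
    LowerSemicontinuous fun u => Metric.diam ((F · u) '' K u) := by
  intro u r (hr : r < Metric.diam _)
  rcases lt_or_ge r 0 with r_neg | r_nonneg
  · exact Filter.Eventually.of_forall fun v => r_neg.trans_le Metric.diam_nonneg
  rcases hK u with subsingleton | subset_closure
  · rw [Metric.diam_subsingleton (subsingleton.image _)] at hr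
    exact absurd hr r_nonneg.not_gt
  obtain ⟨x, hx, y, hy, lt_dist⟩ : ∃ x ∈ K u, ∃ y ∈ K u, r < dist (F x u) (F y u) := by
    contrapose! hr
    exact Metric.diam_le_of_forall_dist_le r_nonneg (Set.forall_mem_image.2 fun x hx =>
      Set.forall_mem_image.2 fun y hy => hr x hx y hy)
  have continuous_F (v : U) : Continuous (F · v) := hF.comp (Continuous.prodMk_left v)
  have isOpen_lt_dist : IsOpen {p : X × X | r < dist (F p.1 u) (F p.2 u)} :=
    isOpen_lt continuous_const
      (((continuous_F u).comp continuous_fst).dist ((continuous_F u).comp continuous_snd))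
  have mem_closure_prod := Set.mk_mem_prod (subset_closure hx) (subset_closure hy)
  rw [← closure_prod_eq, mem_closure_iff] at mem_closure_prod
  obtain ⟨⟨x', y'⟩, lt_dist', hx', hy'⟩ := mem_closure_prod _ isOpen_lt_dist lt_dist
  have continuous_dist : Continuous fun v => dist (F x' v) (F y' v) :=
    (hF.comp (Continuous.prodMk_right x')).dist (hF.comp (Continuous.prodMk_right y'))
  filter_upwards [hx', hy', continuous_dist.continuousAt.eventually_const_lt lt_dist']
    with v hxv hyv lt_dist_v
  exact lt_dist_v.trans_le (Metric.dist_le_diam_of_mem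
    (isBounded_image_of_continuous_uncurry hF v _) (Set.mem_image_of_mem _ hxv)
    (Set.mem_image_of_mem _ hyv))

theorem continuous_diam_image (hF : Continuous (Function.uncurry F))
    (hK : IsClosed {p : U × X | p.2 ∈ K p.1})
    (hK' : ∀ u, (K u).Subsingleton ∨ K u ⊆ closure {x | ∀ᶠ v in 𝓝 u, x ∈ K v}) :
    Continuous fun u => Metric.diam ((F · u) '' K u) :=
  continuous_iff_lower_upperSemicontinuous.2
    ⟨lowerSemicontinuous_diam_image hF hK', upperSemicontinuous_diam_image hF hK⟩

end DiamImage

/-! ### Half-spaces and strictly convex sets -/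

section StrictlyConvex

variable {E : Type*} [NormedAddCommGroup E] [NormedSpace ℝ E] {A : Set E}

theorem strictConvex_of_forall_supporting_hyperplane (hA : Convex ℝ A)
    (hint : (interior A).Nonempty)
    (h : ∀ ℓ : E →L[ℝ] ℝ, ℓ ≠ 0 → ∀ c, (∀ y ∈ A, ℓ y ≤ c) → {y ∈ A | ℓ y = c}.Subsingleton) :
    StrictConvex ℝ A := by
  intro x hx y hy hxy a b ha hb hab
  by_contra notMem_interior
  obtain ⟨ℓ, hℓ⟩ := geometric_hahn_banach_open_point hA.interior isOpen_interior notMem_interior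
  set c := ℓ (a • x + b • y) with hc
  have ℓ_ne_zero : ℓ ≠ 0 := by
    rintro rfl
    obtain ⟨z, hz⟩ := hint
    exact lt_irrefl _ (hℓ z hz)
  have le_c (z) (hz : z ∈ A) : ℓ z ≤ c := by
    have mem_closure_interior : z ∈ closure (interior A) :=
      hA.closure_interior_eq_closure_of_nonempty_interior hint ▸ subset_closure hz
    exact closure_minimal (fun w hw => (hℓ w hw).le) (isClosed_le ℓ.continuous continuous_const)
      mem_closure_interior
  rw [map_add, map_smul, map_smul, smul_eq_mul, smul_eq_mul] at hc
  have hx' : ℓ x = c := le_antisymm (le_c x hx) <|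
    le_of_mul_le_mul_left (by linear_combination b * le_c y hy + hc + c * hab) ha
  have hy' : ℓ y = c := le_antisymm (le_c y hy) <|
    le_of_mul_le_mul_left (by linear_combination a * le_c x hx + hc + c * hab) hb
  exact hxy (h ℓ ℓ_ne_zero c le_c ⟨hx, hx'⟩ ⟨hy, hy'⟩)

theorem exists_mem_interior_lt_of_not_subsingleton (hA : StrictConvex ℝ A) {ℓ : E →L[ℝ] ℝ}
    (hℓ : ℓ ≠ 0) {c : ℝ} (h : ¬(A ∩ {x | c ≤ ℓ x}).Subsingleton) :
    ∃ x ∈ interior A, c < ℓ x := by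
  obtain ⟨x, hx, y, hy, hxy⟩ := Set.not_subsingleton_iff.1 h
  have midpoint_mem : midpoint ℝ x y ∈ interior A ∩ {x | c ≤ ℓ x} :=
    ⟨hA.openSegment_subset hx.1 hy.1 hxy (midpoint_mem_openSegment x y),
      ((convex_halfSpace_ge ℓ.toLinearMap.isLinear c).midpoint_mem hx.2 hy.2)⟩
  have eventually_mem_image : ∀ᶠ t in 𝓝 (ℓ (midpoint ℝ x y)), t ∈ ℓ '' interior A :=
    (ℓ.isOpenMap_of_ne_zero hℓ).image_mem_nhds (isOpen_interior.mem_nhds midpoint_mem.1)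
  obtain ⟨_, lt, z, hz, rfl⟩ := eventually_mem_image.exists_gt
  exact ⟨z, hz, midpoint_mem.2.trans_lt lt⟩

theorem subsingleton_or_subset_closure_inter_halfSpace (hA : StrictConvex ℝ A) {ℓ : E →L[ℝ] ℝ}
    {c : ℝ} (h : ℓ ≠ 0 ∨ c ≠ 0) : (A ∩ {x | c ≤ ℓ x}).Subsingleton ∨
      A ∩ {x | c ≤ ℓ x} ⊆ closure (A ∩ {x | c < ℓ x}) := by
  rcases eq_or_ne ℓ 0 with rfl | hℓ
  · rcases (h.resolve_left (not_not.2 rfl)).lt_or_gt with hc | hc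
    · exact .inr fun x hx => subset_closure ⟨hx.1, hc⟩
    · exact .inl fun x hx => absurd hx.2 hc.not_ge
  refine or_iff_not_imp_left.2 fun not_subsingleton => ?_
  obtain ⟨x, hx, lt⟩ := exists_mem_interior_lt_of_not_subsingleton hA hℓ not_subsingleton
  have interior_halfSpace : interior {x | c ≤ ℓ x} = {x | c < ℓ x} := by
    change interior (ℓ ⁻¹' Set.Ici c) = ℓ ⁻¹' Set.Ioi c
    rw [← (ℓ.isOpenMap_of_ne_zero hℓ).preimage_interior_eq_interior_preimage ℓ.continuous,
      interior_Ici]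
  have convex : Convex ℝ (A ∩ {x | c ≤ ℓ x}) :=
    hA.convex.inter (convex_halfSpace_ge ℓ.toLinearMap.isLinear c)
  have interior_eq : interior (A ∩ {x | c ≤ ℓ x}) = interior A ∩ {x | c < ℓ x} := by
    rw [interior_inter, interior_halfSpace]
  calc A ∩ {x | c ≤ ℓ x} ⊆ closure (interior (A ∩ {x | c ≤ ℓ x})) := by
        rw [convex.closure_interior_eq_closure_of_nonempty_interior
          (interior_eq ▸ ⟨x, hx, lt⟩)]
        exact subset_closure
    _ ⊆ closure (A ∩ {x | c < ℓ x}) := by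
        rw [interior_eq]
        exact closure_mono (Set.inter_subset_inter_left _ interior_subset)

end StrictlyConvex

/-! ### Oscillations over half-spaces -/

section HalfSpace

variable {n : ℕ} {u : EuclideanSpace ℝ (Fin (n + 1))}

theorem inner_eq_sum_mul (v x : EuclideanSpace ℝ (Fin n)) : inner ℝ v x = ∑ i, v i * x i := by
  simp [PiLp.inner_apply, mul_comm]

theorem strictConvex_of_forall_sum_mul_eq_subsingleton {A : Set (EuclideanSpace ℝ (Fin n))}
    (hA : Convex ℝ A) (hint : (interior A).Nonempty)
    (h : ∀ (v : EuclideanSpace ℝ (Fin n)) (c : ℝ), v ≠ 0 → (∀ y ∈ A, ∑ j, v j * y j ≤ c) →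
      {y ∈ A | ∑ j, v j * y j = c}.Subsingleton) :
    StrictConvex ℝ A := by
  refine strictConvex_of_forall_supporting_hyperplane hA hint fun ℓ hℓ c => ?_
  obtain ⟨v, rfl⟩ := (InnerProductSpace.toDual ℝ _).surjective ℓ
  simp only [InnerProductSpace.toDual_apply_apply, inner_eq_sum_mul]
  exact h v c (ne_zero_of_map hℓ)

/-- The linear functional `⟪u', ·⟫`, where `u'` consists of the first `n` coordinates of `u`. -/
noncomputable def halfSpaceFunctional (u : EuclideanSpace ℝ (Fin (n + 1))) :
    EuclideanSpace ℝ (Fin n) →L[ℝ] ℝ :=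
  innerSL ℝ (WithLp.toLp 2 fun i => u i.castSucc)

theorem halfSpaceFunctional_apply (u : EuclideanSpace ℝ (Fin (n + 1)))
    (x : EuclideanSpace ℝ (Fin n)) : halfSpaceFunctional u x = ∑ i, u (Fin.castSucc i) * x i :=
  inner_eq_sum_mul _ x

theorem halfSpaceFunctional_ne_zero_or_last_ne_zero (hu : u ≠ 0) :
    halfSpaceFunctional u ≠ 0 ∨ u (Fin.last n) ≠ 0 := by
  contrapose! hu
  obtain ⟨functional_eq_zero, last_eq_zero⟩ := hu
  rw [halfSpaceFunctional, ← norm_eq_zero, innerSL_apply_norm, norm_eq_zero] at functional_eq_zero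
  ext i
  cases i using Fin.lastCases with
  | last => exact last_eq_zero
  | cast i => exact congrArg (· i) functional_eq_zero

theorem Hplus_eq_setOf_le (u : EuclideanSpace ℝ (Fin (n + 1))) :
    Hplus n u = {x | u (Fin.last n) ≤ halfSpaceFunctional u x} := by
  simp only [Hplus, halfSpaceFunctional_apply, ge_iff_le]

theorem Hplus_neg (u : EuclideanSpace ℝ (Fin (n + 1))) : Hplus n (-u) = Hminus n u := by
  simp [Hplus, Hminus]

theorem Hplus_union_Hminus (u : EuclideanSpace ℝ (Fin (n + 1))) :
    Hplus n u ∪ Hminus n u = Set.univ :=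
  Set.eq_univ_of_forall fun x => le_total (u (Fin.last n)) (∑ i, u (Fin.castSucc i) * x i)

theorem isClosed_setOf_mem_Hplus :
    IsClosed {p : EuclideanSpace ℝ (Fin (n + 1)) × EuclideanSpace ℝ (Fin n) |
      p.2 ∈ Hplus n p.1} := by
  simp only [Hplus, Set.mem_ofPred_eq, ge_iff_le]
  exact isClosed_le (by fun_prop) (by fun_prop)

theorem eventually_mem_Hplus {x : EuclideanSpace ℝ (Fin n)}
    (hx : u (Fin.last n) < halfSpaceFunctional u x) : ∀ᶠ v in 𝓝 u, x ∈ Hplus n v := by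
  rw [halfSpaceFunctional_apply] at hx
  have isOpen_setOf_lt : IsOpen {v : EuclideanSpace ℝ (Fin (n + 1)) |
      v (Fin.last n) < ∑ i, v (Fin.castSucc i) * x i} := isOpen_lt (by fun_prop) (by fun_prop)
  exact (isOpen_setOf_lt.eventually_mem hx).mono fun v => le_of_lt (a := v (Fin.last n))

variable {A : Set (EuclideanSpace ℝ (Fin n))}
  {f : EuclideanSpace ℝ (Fin n) → EuclideanSpace ℝ (Fin (n + 1)) → ℝ}

theorem subsingleton_or_subset_closure_eventually_mem_Hplus (hA : StrictConvex ℝ A) (hu : u ≠ 0) :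
    (A ∩ Hplus n u).Subsingleton ∨
      A ∩ Hplus n u ⊆ closure (A ∩ {x | ∀ᶠ v in 𝓝 u, x ∈ Hplus n v}) := by
  rw [Hplus_eq_setOf_le]
  refine (subsingleton_or_subset_closure_inter_halfSpace hA
    (halfSpaceFunctional_ne_zero_or_last_ne_zero hu)).imp_right fun h => h.trans ?_
  exact closure_mono (Set.inter_subset_inter_right _ fun x => eventually_mem_Hplus)

/-- The oscillation of `f · u` over the part of `A` in the upper half-space of `u`. -/
noncomputable def upperOscillation (A : Set (EuclideanSpace ℝ (Fin n)))
    (f : EuclideanSpace ℝ (Fin n) → EuclideanSpace ℝ (Fin (n + 1)) → ℝ)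
    (u : EuclideanSpace ℝ (Fin (n + 1))) : ℝ :=
  Metric.diam ((f · u) '' (A ∩ Hplus n u))

theorem continuousOn_upperOscillation (hA : IsCompact A) (hA' : StrictConvex ℝ A)
    (hf : ContinuousOn (Function.uncurry f) (A ×ˢ Metric.sphere 0 1)) :
    ContinuousOn (upperOscillation A f) (Metric.sphere 0 1) := by
  have : CompactSpace A := isCompact_iff_compactSpace.1 hA
  let F (x : A) (u : Metric.sphere (0 : EuclideanSpace ℝ (Fin (n + 1))) 1) : ℝ := f x u
  let K (u : Metric.sphere (0 : EuclideanSpace ℝ (Fin (n + 1))) 1) : Set A :=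
    Subtype.val ⁻¹' Hplus n u
  have continuous_F : Continuous (Function.uncurry F) :=
    hf.comp_continuous (continuous_subtype_val.prodMap continuous_subtype_val)
      fun p => ⟨p.1.2, p.2.2⟩
  have isClosed_K : IsClosed {p : Metric.sphere 0 1 × A | p.2 ∈ K p.1} :=
    isClosed_setOf_mem_Hplus.preimage (continuous_subtype_val.prodMap continuous_subtype_val)
  have approximable_K (u) :
      (K u).Subsingleton ∨ K u ⊆ closure {x | ∀ᶠ v in 𝓝 u, x ∈ K v} := by
    refine (subsingleton_or_subset_closure_eventually_mem_Hplus hA'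
      (ne_zero_of_mem_unit_sphere u)).imp (fun h x hx y hy => Subtype.ext (h ⟨x.2, hx⟩ ⟨y.2, hy⟩))
      fun h x hx => closure_subtype.2 (closure_mono ?_ (h ⟨x.2, hx⟩))
    rintro y ⟨hyA, hy⟩
    exact ⟨⟨y, hyA⟩, continuous_subtype_val.continuousAt.eventually hy, rfl⟩
  have upperOscillation_eq (u : Metric.sphere 0 1) :
      upperOscillation A f u = Metric.diam ((F · u) '' K u) := by
    rw [upperOscillation, ← Subtype.image_preimage_coe, Set.image_image]
  rw [continuousOn_iff_continuous_domRestrict]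
  exact (continuous_diam_image continuous_F isClosed_K approximable_K).congr
    fun u => (upperOscillation_eq u).symm

theorem upperOscillation_neg (h : ∀ x ∈ A, f x (-u) = -f x u) :
    upperOscillation A f (-u) = Metric.diam ((f · u) '' (A ∩ Hminus n u)) := by
  have image_neg : (f · (-u)) '' (A ∩ Hminus n u) =
      IsometryEquiv.neg ℝ '' ((f · u) '' (A ∩ Hminus n u)) := by
    rw [Set.image_image]
    exact Set.image_congr fun x hx => h x hx.1
  rw [upperOscillation, Hplus_neg, image_neg, (IsometryEquiv.neg ℝ).isometry.diam_image]

theorem oscillation_eq_or_const_of_diam_eq {φ : EuclideanSpace ℝ (Fin n) → ℝ}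
    (hφ : Bornology.IsBounded (φ '' A))
    (h : Metric.diam (φ '' (A ∩ Hplus n u)) = Metric.diam (φ '' (A ∩ Hminus n u))) :
    ((A ∩ Hplus n u).Nonempty ∧ (A ∩ Hminus n u).Nonempty ∧
        sSup (φ '' (A ∩ Hplus n u)) - sInf (φ '' (A ∩ Hplus n u)) =
          sSup (φ '' (A ∩ Hminus n u)) - sInf (φ '' (A ∩ Hminus n u))) ∨
      (((A ∩ Hplus n u = ∅ ∧ A ∩ Hminus n u = A) ∨ (A ∩ Hminus n u = ∅ ∧ A ∩ Hplus n u = A)) ∧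
        ∃ c : ℝ, ∀ x ∈ A, φ x = c) := by
  have exists_const (hdiam : Metric.diam (φ '' A) = 0) : ∃ c, ∀ x ∈ A, φ x = c := by
    rcases A.eq_empty_or_nonempty with rfl | ⟨x, hx⟩
    · exact ⟨0, by simp⟩
    refine ⟨φ x, fun y hy => dist_le_zero.1 ?_⟩
    exact (Metric.dist_le_diam_of_mem hφ ⟨y, hy, rfl⟩ ⟨x, hx, rfl⟩).trans_eq hdiam
  have union_eq : A ∩ Hplus n u ∪ A ∩ Hminus n u = A := by
    rw [← Set.inter_union_distrib_left, Hplus_union_Hminus, Set.inter_univ]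
  rcases (A ∩ Hplus n u).eq_empty_or_nonempty with plus_empty | plus_nonempty
  · rw [plus_empty, Set.empty_union] at union_eq
    rw [plus_empty, union_eq, Set.image_empty, Metric.diam_empty] at h
    exact .inr ⟨.inl ⟨plus_empty, union_eq⟩, exists_const h.symm⟩
  rcases (A ∩ Hminus n u).eq_empty_or_nonempty with minus_empty | minus_nonempty
  · rw [minus_empty, Set.union_empty] at union_eq
    rw [minus_empty, union_eq, Set.image_empty, Metric.diam_empty] at h
    exact .inr ⟨.inr ⟨minus_empty, union_eq⟩, exists_const h⟩
  rw [Real.diam_eq (hφ.subset (Set.image_mono Set.inter_subset_left)),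
    Real.diam_eq (hφ.subset (Set.image_mono Set.inter_subset_left))] at h
  exact .inl ⟨plus_nonempty, minus_nonempty, h⟩

end HalfSpace

theorem borsuk_ulam_nlp_general (n : ℕ) (A : Fin n → Set (EuclideanSpace ℝ (Fin n)))
    (hcomp : ∀ i, IsCompact (A i)) (hstrict : ∀ i, StrictConvex ℝ (A i))
    (f : Fin n → EuclideanSpace ℝ (Fin n) → EuclideanSpace ℝ (Fin (n + 1)) → ℝ)
    (hf : ∀ i, ContinuousOn (Function.uncurry (f i)) (A i ×ˢ Metric.sphere 0 1))
    (hanti : ∀ i, ∀ x ∈ A i, ∀ u ∈ Metric.sphere 0 1, f i x (-u) = -f i x u) :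
    ∃ u ∈ Metric.sphere (0 : EuclideanSpace ℝ (Fin (n + 1))) 1, ∀ i : Fin n,
      ((A i ∩ Hplus n u).Nonempty ∧ (A i ∩ Hminus n u).Nonempty ∧
        sSup ((fun x => f i x u) '' (A i ∩ Hplus n u)) -
            sInf ((fun x => f i x u) '' (A i ∩ Hplus n u)) =
          sSup ((fun x => f i x u) '' (A i ∩ Hminus n u)) -
            sInf ((fun x => f i x u) '' (A i ∩ Hminus n u))) ∨
      (((A i ∩ Hplus n u = ∅ ∧ A i ∩ Hminus n u = A i) ∨
          (A i ∩ Hminus n u = ∅ ∧ A i ∩ Hplus n u = A i)) ∧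
        ∃ c : ℝ, ∀ x ∈ A i, f i x u = c) := by
  let g (u : EuclideanSpace ℝ (Fin (n + 1))) (i : Fin n) : ℝ :=
    upperOscillation (A i) (f i) u - upperOscillation (A i) (f i) (-u)
  have continuousOn_g : ContinuousOn g (Metric.sphere 0 1) := continuousOn_pi.2 fun i => by
    have continuousOn := continuousOn_upperOscillation (hcomp i) (hstrict i) (hf i)
    exact continuousOn.sub
      (continuousOn.comp continuous_neg.continuousOn fun u hu => by simpa using hu)
  obtain ⟨u, hu, g_eq_zero⟩ := borsuk_ulam finrank_euclideanSpace_fin continuousOn_g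
    fun u _ => funext fun i => by simp [g]
  refine ⟨u, hu, fun i => oscillation_eq_or_const_of_diam_eq ?_ ?_⟩
  · exact ((hcomp i).image_of_continuousOn ((hf i).comp
      (Continuous.prodMk_left u).continuousOn fun x hx => ⟨hx, hu⟩)).isBounded
  · rw [← upperOscillation_neg fun x hx => hanti i x hx u hu]
    exact sub_eq_zero.1 (congrFun g_eq_zero i)

theorem borsuk_ulam_nlp (n : ℕ) (A : Fin n → Set (EuclideanSpace ℝ (Fin n)))
    (hne : ∀ i, (A i).Nonempty) (hcomp : ∀ i, IsCompact (A i)) (hconv : ∀ i, Convex ℝ (A i))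
    (hint : ∀ i, (interior (A i)).Nonempty)
    -- strict convexity: every supporting hyperplane meets `A i` in at most one point
    (hstrict : ∀ i (v : EuclideanSpace ℝ (Fin n)) (c : ℝ), v ≠ 0 →
      (∀ y ∈ A i, (∑ j : Fin n, v j * y j) ≤ c) →
      ({y ∈ A i | (∑ j : Fin n, v j * y j) = c}).Subsingleton)
    (f : Fin n → EuclideanSpace ℝ (Fin n) → EuclideanSpace ℝ (Fin (n + 1)) → ℝ)
    (hf : ∀ i, Continuous fun p : EuclideanSpace ℝ (Fin n) × EuclideanSpace ℝ (Fin (n + 1)) =>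
      f i p.1 p.2)
    (hanti : ∀ i x u, f i x (-u) = -f i x u) :
    ∃ u ∈ Metric.sphere (0 : EuclideanSpace ℝ (Fin (n + 1))) 1, ∀ i : Fin n,
      ((A i ∩ Hplus n u).Nonempty ∧ (A i ∩ Hminus n u).Nonempty ∧
        sSup ((fun x => f i x u) '' (A i ∩ Hplus n u)) -
            sInf ((fun x => f i x u) '' (A i ∩ Hplus n u)) =
          sSup ((fun x => f i x u) '' (A i ∩ Hminus n u)) -
            sInf ((fun x => f i x u) '' (A i ∩ Hminus n u))) ∨
      (((A i ∩ Hplus n u = ∅ ∧ A i ∩ Hminus n u = A i) ∨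
          (A i ∩ Hminus n u = ∅ ∧ A i ∩ Hplus n u = A i)) ∧
        ∃ c : ℝ, ∀ x ∈ A i, f i x u = c) := by
  exact borsuk_ulam_nlp_general n A hcomp
    (fun i => strictConvex_of_forall_sum_mul_eq_subsingleton (hconv i) (hint i) (hstrict i))
    f (fun i => (hf i).continuousOn) fun i x _ u _ => hanti i x u
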